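/- Let ϵ > 0 and let h : ℝ → ℂ be continuously differentiable and 2π-periodic. Define v on the open ball B_ϵ by v(r cos φ, r sin φ) := (r/ϵ) h(φ) for 0 ≤ r < ϵ and 0 ≤ φ < 2π; v is differentiable on B_ϵ ∖ {0}. Then ∫_{B_ϵ} |∇v|² dx dy ≤ 4 ∫₀^{2π} ( |h(φ)|² + |h′(φ)|² ) dφ. -/

import Mathlib

open MeasureTheory Real Set

noncomputable section

abbrev E2 : Type := EuclideanSpace ℝ (Fin 2)

/-- The point `(x, y)` in the Euclidean plane. -/
def pt (x y : ℝ) : E2 := !₂[x, y]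

/-- The `i`-th partial derivative of `f : ℝ² → ℂ`. -/
def pd (i : Fin 2) (f : E2 → ℂ) (p : E2) : ℂ :=
  fderiv ℝ f p (EuclideanSpace.single i 1)

/-- `|∇f|²` at `p`, i.e. `|∂f/∂x|² + |∂f/∂y|²`. -/
def gradSq (f : E2 → ℂ) (p : E2) : ℝ :=
  ‖pd 0 f p‖ ^ 2 + ‖pd 1 f p‖ ^ 2

/-- The Laplacian `Δf` at `p`. -/
def lap (f : E2 → ℂ) (p : E2) : ℂ :=
  pd 0 (pd 0 f) p + pd 1 (pd 1 f) p

/-- The point `(τ cos φ, τ sin φ)` on the circle of radius `τ`. -/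
def circ (τ φ : ℝ) : E2 := pt (τ * Real.cos φ) (τ * Real.sin φ)

/-!
In polar coordinates `|∇v|² = |∂ᵣv|² + r⁻² |∂_φ v|²`, and for `v = (r/ϵ) h(φ)` this is
`(|h|² + |h′|²) / ϵ²`, independently of `r`. Integrating against `r dr dφ` over
`(0, ϵ) × (0, 2π)` gives exactly `½ ∫₀^{2π} (|h|² + |h′|²)`.
-/

theorem differentiableAt_of_comp_hasStrictFDerivAt {𝕜 E F G : Type*} [NontriviallyNormedField 𝕜]
    [NormedAddCommGroup E] [NormedSpace 𝕜 E] [CompleteSpace E]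
    [NormedAddCommGroup F] [NormedSpace 𝕜 F] [NormedAddCommGroup G] [NormedSpace 𝕜 G]
    {f : E → F} {f' : E ≃L[𝕜] F} {g : F → G} {a : E}
    (hf : HasStrictFDerivAt f (f' : E →L[𝕜] F) a) (hgf : DifferentiableAt 𝕜 (g ∘ f) a) :
    DifferentiableAt 𝕜 g (f a) := by
  have hinv : DifferentiableAt 𝕜 (hf.localInverse f f' a) (f a) :=
    hf.to_localInverse.hasFDerivAt.differentiableAt
  rw [← hf.localInverse_apply_image] at hgf
  refine (hgf.comp (f a) hinv).congr_of_eventuallyEq ?_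
  filter_upwards [hf.eventually_right_inverse] with y hy
  simp [hy]

theorem norm_sq_rotation {F : Type*} [NormedAddCommGroup F] [InnerProductSpace ℝ F]
    (φ : ℝ) (a b : F) :
    ‖cos φ • a + sin φ • b‖ ^ 2 + ‖-sin φ • a + cos φ • b‖ ^ 2 = ‖a‖ ^ 2 + ‖b‖ ^ 2 := by
  simp only [norm_add_sq_real, norm_smul, inner_smul_left, inner_smul_right, mul_pow,
    norm_eq_abs, sq_abs, abs_neg, conj_trivial]
  linear_combination (‖a‖ ^ 2 + ‖b‖ ^ 2) * sin_sq_add_cos_sq φ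

/-- The identification of the Euclidean plane with `ℝ × ℝ`, through which Mathlib's `polarCoord`
becomes a chart of `E2`. -/
def planeEquivProd : E2 ≃L[ℝ] ℝ × ℝ :=
  (EuclideanSpace.equiv (Fin 2) ℝ).trans (.finTwoArrow ℝ ℝ)

theorem planeEquivProd_symm_polarCoord_symm (q : ℝ × ℝ) :
    planeEquivProd.symm (polarCoord.symm q) = circ q.1 q.2 := rfl

theorem measurePreserving_planeEquivProd_symm : MeasurePreserving planeEquivProd.symm :=
  (PiLp.volume_preserving_toLp (Fin 2)).comp (volume_preserving_finTwoArrow ℝ).symm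

theorem circ_eq_smul_add_smul (r φ : ℝ) :
    circ r φ = (r * cos φ) • EuclideanSpace.single 0 1 +
      (r * sin φ) • EuclideanSpace.single 1 1 := by
  ext i
  fin_cases i <;> simp [circ, pt]

theorem norm_circ (r φ : ℝ) : ‖circ r φ‖ = |r| := by
  have : (r * cos φ) ^ 2 + (r * sin φ) ^ 2 = r ^ 2 := by
    linear_combination r ^ 2 * sin_sq_add_cos_sq φ
  simp [circ, pt, EuclideanSpace.norm_eq, this, sqrt_sq_eq_abs]

theorem circ_add_pi (r φ : ℝ) : circ r (φ + π) = -circ r φ := by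
  ext i
  fin_cases i <;> simp [circ, pt]

theorem hasDerivAt_circ_radius (r φ : ℝ) :
    HasDerivAt (fun s ↦ circ s φ)
      (cos φ • EuclideanSpace.single 0 1 + sin φ • EuclideanSpace.single 1 1) r := by
  simp only [circ_eq_smul_add_smul]
  exact ((hasDerivAt_mul_const (cos φ)).smul_const _).add
    ((hasDerivAt_mul_const (sin φ)).smul_const _)

theorem hasDerivAt_circ_angle (r φ : ℝ) :
    HasDerivAt (fun ψ ↦ circ r ψ)
      (r • (-sin φ • EuclideanSpace.single 0 1 + cos φ • EuclideanSpace.single 1 1)) φ := by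
  simp only [circ_eq_smul_add_smul, smul_add, smul_smul]
  exact (((hasDerivAt_cos φ).const_mul r).smul_const _).add
    (((hasDerivAt_sin φ).const_mul r).smul_const _)

theorem exists_hasStrictFDerivAt_circ {r : ℝ} (hr : r ≠ 0) (φ : ℝ) :
    ∃ L : (ℝ × ℝ) ≃L[ℝ] E2,
      HasStrictFDerivAt (fun q : ℝ × ℝ ↦ circ q.1 q.2) (L : ℝ × ℝ →L[ℝ] E2) (r, φ) := by
  have hdet : (fderivPolarCoordSymm (r, φ)).det ≠ 0 := by rwa [det_fderivPolarCoordSymm]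
  have hsmooth : ContDiff ℝ 1 polarCoord.symm :=
    (contDiff_fst.mul contDiff_snd.cos).prodMk (contDiff_fst.mul contDiff_snd.sin)
  have hpolar : HasStrictFDerivAt polarCoord.symm (fderivPolarCoordSymm (r, φ)) (r, φ) :=
    hsmooth.contDiffAt.hasStrictFDerivAt' (hasFDerivAt_polarCoord_symm _) one_ne_zero
  exact ⟨((fderivPolarCoordSymm (r, φ)).toContinuousLinearEquivOfDetNeZero hdet).trans
    planeEquivProd.symm, planeEquivProd.symm.hasStrictFDerivAt.comp (r, φ) hpolar⟩

theorem differentiableAt_circ_of_comp {F : Type*} [NormedAddCommGroup F] [NormedSpace ℝ F]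
    {f : E2 → F} {r φ : ℝ} (hr : r ≠ 0)
    (hf : DifferentiableAt ℝ (fun q : ℝ × ℝ ↦ f (circ q.1 q.2)) (r, φ)) :
    DifferentiableAt ℝ f (circ r φ) := by
  obtain ⟨_, hcirc⟩ := exists_hasStrictFDerivAt_circ hr φ
  exact differentiableAt_of_comp_hasStrictFDerivAt (a := (r, φ)) hcirc hf

theorem gradSq_circ {f : E2 → ℂ} {r φ : ℝ} {fr fφ : ℂ} (hr : r ≠ 0)
    (hf : DifferentiableAt ℝ f (circ r φ)) (hfr : HasDerivAt (fun s ↦ f (circ s φ)) fr r)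
    (hfφ : HasDerivAt (fun ψ ↦ f (circ r ψ)) fφ φ) :
    gradSq f (circ r φ) = ‖fr‖ ^ 2 + ‖fφ‖ ^ 2 / r ^ 2 := by
  have radial : fr = cos φ • pd 0 f (circ r φ) + sin φ • pd 1 f (circ r φ) := by
    simpa only [map_add, map_smul, pd] using
      hfr.unique (hf.hasFDerivAt.comp_hasDerivAt r (hasDerivAt_circ_radius r φ))
  have angular : fφ = r • (-sin φ • pd 0 f (circ r φ) + cos φ • pd 1 f (circ r φ)) := by
    simpa only [map_add, map_smul, pd] using
      hfφ.unique (hf.hasFDerivAt.comp_hasDerivAt φ (hasDerivAt_circ_angle r φ))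
  rw [gradSq, radial, angular, norm_smul, mul_pow, norm_eq_abs, sq_abs,
    mul_div_cancel_left₀ _ (pow_ne_zero 2 hr), norm_sq_rotation]

theorem gradSq_circ_of_eventuallyEq_radial {f : E2 → ℂ} {h : ℝ → ℂ} {ϵ r φ : ℝ} (hr : r ≠ 0)
    (hh : DifferentiableAt ℝ h φ)
    (hf : ∀ᶠ q : ℝ × ℝ in nhds (r, φ), f (circ q.1 q.2) = (q.1 / ϵ : ℝ) * h q.2) :
    gradSq f (circ r φ) = (‖h φ‖ ^ 2 + ‖deriv h φ‖ ^ 2) / ϵ ^ 2 := by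
  have hdiff : DifferentiableAt ℝ (fun q : ℝ × ℝ ↦ f (circ q.1 q.2)) (r, φ) := by
    refine DifferentiableAt.congr_of_eventuallyEq ?_ hf
    have : DifferentiableAt ℝ (fun q : ℝ × ℝ ↦ h q.2) (r, φ) := hh.comp (r, φ) differentiableAt_snd
    simp only [← Complex.real_smul]
    fun_prop
  have hradial : HasDerivAt (fun s ↦ f (circ s φ)) ((1 / ϵ : ℝ) * h φ) r :=
    (((hasDerivAt_id r).div_const ϵ).ofReal_comp.mul_const _).congr_of_eventuallyEq
      ((Continuous.prodMk_left φ).continuousAt.eventually hf)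
  have hangular : HasDerivAt (fun ψ ↦ f (circ r ψ)) ((r / ϵ : ℝ) * deriv h φ) φ :=
    (hh.hasDerivAt.const_mul _).congr_of_eventuallyEq
      ((Continuous.prodMk_right r).continuousAt.eventually hf)
  rw [gradSq_circ hr (differentiableAt_circ_of_comp hr hdiff) hradial hangular]
  simp only [norm_mul, Complex.norm_real, mul_pow, norm_eq_abs, sq_abs]
  field_simp

theorem lintegral_eq_lintegral_circ (F : E2 → ENNReal) :
    ∫⁻ p, F p = ∫⁻ q in Ioi 0 ×ˢ Ioo (-π) π, ENNReal.ofReal q.1 * F (circ q.1 q.2) := by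
  rw [← measurePreserving_planeEquivProd_symm.lintegral_comp_emb
    planeEquivProd.symm.toHomeomorph.measurableEmbedding, ← lintegral_comp_polarCoord_symm]
  simp only [planeEquivProd_symm_polarCoord_symm, smul_eq_mul, polarCoord_target]

theorem lintegral_eq_lintegral_circ_Ioo_zero_two_pi (F : E2 → ENNReal) :
    ∫⁻ p, F p = ∫⁻ q in Ioi 0 ×ˢ Ioo 0 (2 * π), ENNReal.ofReal q.1 * F (circ q.1 q.2) := by
  have hpre : (· + ((0, π) : ℝ × ℝ)) ⁻¹' (Ioi 0 ×ˢ Ioo 0 (2 * π)) = Ioi 0 ×ˢ Ioo (-π) π := by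
    ext q
    simp only [mem_preimage, mem_prod, mem_Ioi, mem_Ioo, Prod.fst_add, Prod.snd_add]
    constructor <;> rintro ⟨h₁, h₂, h₃⟩ <;> refine ⟨?_, ?_, ?_⟩ <;> linarith
  calc ∫⁻ p, F p = ∫⁻ p, F (-p) := (lintegral_neg_eq_self F).symm
    _ = ∫⁻ q in Ioi 0 ×ˢ Ioo (-π) π, ENNReal.ofReal q.1 * F (circ q.1 (q.2 + π)) := by
      simp only [lintegral_eq_lintegral_circ, circ_add_pi]
    _ = ∫⁻ q in Ioi 0 ×ˢ Ioo 0 (2 * π), ENNReal.ofReal q.1 * F (circ q.1 q.2) := by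
      simpa only [hpre, Prod.fst_add, Prod.snd_add, add_zero] using
        (measurePreserving_add_right volume ((0, π) : ℝ × ℝ)).setLIntegral_comp_preimage_emb
          (measurableEmbedding_addRight _) (fun q ↦ ENNReal.ofReal q.1 * F (circ q.1 q.2))
          (Ioi 0 ×ˢ Ioo 0 (2 * π))

theorem setLIntegral_ball_eq_lintegral_circ (ρ : ℝ) (F : E2 → ENNReal) :
    ∫⁻ p in Metric.ball 0 ρ, F p =
      ∫⁻ q in Ioo 0 ρ ×ˢ Ioo 0 (2 * π), ENNReal.ofReal q.1 * F (circ q.1 q.2) := by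
  have hset : Ioo 0 ρ ×ˢ Ioo 0 (2 * π) = (Iio ρ ×ˢ univ) ∩ (Ioi 0 ×ˢ Ioo 0 (2 * π)) := by
    rw [prod_inter_prod, univ_inter, inter_comm, Ioi_inter_Iio]
  rw [← lintegral_indicator Metric.isOpen_ball.measurableSet,
    lintegral_eq_lintegral_circ_Ioo_zero_two_pi, hset,
    ← setLIntegral_indicator (measurableSet_Iio.prod .univ)]
  refine setLIntegral_congr_fun (measurableSet_Ioi.prod measurableSet_Ioo) fun q hq ↦ ?_
  have hmem : circ q.1 q.2 ∈ Metric.ball 0 ρ ↔ q ∈ Iio ρ ×ˢ (univ : Set ℝ) := by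
    simp [norm_circ, abs_of_pos (mem_Ioi.mp hq.1)]
  by_cases hq' : q ∈ Iio ρ ×ˢ (univ : Set ℝ)
  · rw [indicator_of_mem (hmem.mpr hq'), indicator_of_mem hq']
  · rw [indicator_of_notMem (hmem.not.mpr hq'), indicator_of_notMem hq', mul_zero]

theorem lintegral_Ioo_ofReal_id {ρ : ℝ} (hρ : 0 ≤ ρ) :
    ∫⁻ r in Ioo 0 ρ, ENNReal.ofReal r = ENNReal.ofReal (ρ ^ 2 / 2) := by
  have hintegrable : IntegrableOn (fun r ↦ r) (Ioo 0 ρ) :=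
    continuous_id.integrableOn_Icc.mono_set Ioo_subset_Icc_self
  have hnonneg : 0 ≤ᵐ[volume.restrict (Ioo 0 ρ)] fun r ↦ r :=
    (ae_restrict_mem measurableSet_Ioo).mono fun _ hr ↦ hr.1.le
  rw [← ofReal_integral_eq_lintegral_ofReal hintegrable hnonneg, ← integral_Ioc_eq_integral_Ioo,
    ← intervalIntegral.integral_of_le hρ, integral_id, zero_pow two_ne_zero, sub_zero]

theorem measurable_gradSq (f : E2 → ℂ) : Measurable (gradSq f) :=
  ((measurable_fderiv_apply_const ℝ f _).norm.pow_const 2).add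
    ((measurable_fderiv_apply_const ℝ f _).norm.pow_const 2)

theorem gradSq_nonneg (f : E2 → ℂ) (p : E2) : 0 ≤ gradSq f p := by
  unfold gradSq
  positivity

section RadialExtension

variable {ϵ : ℝ} {h : ℝ → ℂ} {v : E2 → ℂ}

theorem lintegral_gradSq_ball_radial (hϵ : 0 < ϵ) (hh : DifferentiableOn ℝ h (Ioo 0 (2 * π)))
    (hv : ∀ r ∈ Ioo 0 ϵ, ∀ φ ∈ Ioo 0 (2 * π), v (circ r φ) = (r / ϵ : ℝ) * h φ) :
    ∫⁻ p in Metric.ball 0 ϵ, ENNReal.ofReal (gradSq v p) =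
      ENNReal.ofReal (1 / 2) *
        ∫⁻ φ in Ioo 0 (2 * π), ENNReal.ofReal (‖h φ‖ ^ 2 + ‖deriv h φ‖ ^ 2) := by
  set g : ℝ → ℝ := fun φ ↦ ‖h φ‖ ^ 2 + ‖deriv h φ‖ ^ 2
  have hgrad : ∀ q ∈ Ioo 0 ϵ ×ˢ Ioo 0 (2 * π),
      gradSq v (circ q.1 q.2) = g q.2 / ϵ ^ 2 := fun q hq ↦ by
    refine gradSq_circ_of_eventuallyEq_radial hq.1.1.ne'
      (hh.differentiableAt (isOpen_Ioo.mem_nhds hq.2)) ?_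
    filter_upwards [(isOpen_Ioo.prod isOpen_Ioo).mem_nhds hq] with q' hq'
    exact hv _ hq'.1 _ hq'.2
  have hg : AEMeasurable g (volume.restrict (Ioo 0 (2 * π))) :=
    ((hh.continuousOn.aemeasurable measurableSet_Ioo).norm.pow_const 2).add
      ((measurable_deriv h).norm.pow_const 2).aemeasurable
  calc ∫⁻ p in Metric.ball 0 ϵ, ENNReal.ofReal (gradSq v p)
      = ∫⁻ q in Ioo 0 ϵ ×ˢ Ioo 0 (2 * π),
          ENNReal.ofReal q.1 * ENNReal.ofReal (g q.2 / ϵ ^ 2) := by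
        rw [setLIntegral_ball_eq_lintegral_circ]
        exact setLIntegral_congr_fun (measurableSet_Ioo.prod measurableSet_Ioo)
          fun q hq ↦ by simp only [hgrad q hq]
    _ = (∫⁻ r in Ioo 0 ϵ, ENNReal.ofReal r) *
          ∫⁻ φ in Ioo 0 (2 * π), ENNReal.ofReal (g φ / ϵ ^ 2) := by
        rw [Measure.volume_eq_prod, ← Measure.prod_restrict]
        exact lintegral_prod_mul ENNReal.measurable_ofReal.aemeasurable
          (hg.div_const _).ennreal_ofReal
    _ = ENNReal.ofReal (ϵ ^ 2 / 2) * (ENNReal.ofReal (ϵ ^ 2)⁻¹ *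
          ∫⁻ φ in Ioo 0 (2 * π), ENNReal.ofReal (g φ)) := by
        rw [lintegral_Ioo_ofReal_id hϵ.le, ← lintegral_const_mul'' _ hg.ennreal_ofReal]
        simp only [div_eq_inv_mul (g _), ENNReal.ofReal_mul (inv_nonneg.mpr (sq_nonneg ϵ))]
    _ = ENNReal.ofReal (1 / 2) * ∫⁻ φ in Ioo 0 (2 * π), ENNReal.ofReal (g φ) := by
        rw [← mul_assoc, ← ENNReal.ofReal_mul (by positivity)]
        congr 2
        field_simp

theorem radial_extension_gradient_bound_general (hϵ : 0 < ϵ)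
    (hh : DifferentiableOn ℝ h (Ioo 0 (2 * π)))
    (hintegrable : IntervalIntegrable (fun φ ↦ ‖h φ‖ ^ 2 + ‖deriv h φ‖ ^ 2) volume 0 (2 * π))
    (hv : ∀ r ∈ Ioo 0 ϵ, ∀ φ ∈ Ioo 0 (2 * π), v (circ r φ) = (r / ϵ : ℝ) * h φ) :
    IntegrableOn (gradSq v) (Metric.ball 0 ϵ) ∧
      ∫ p in Metric.ball 0 ϵ, gradSq v p =
        1 / 2 * ∫ φ in (0:ℝ)..(2 * π), (‖h φ‖ ^ 2 + ‖deriv h φ‖ ^ 2) := by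
  have hlint := lintegral_gradSq_ball_radial hϵ hh hv
  rw [intervalIntegrable_iff_integrableOn_Ioo_of_le two_pi_pos.le] at hintegrable
  rw [← ofReal_integral_eq_lintegral_ofReal hintegrable (ae_of_all _ fun φ ↦ by positivity),
    ← ENNReal.ofReal_mul (by norm_num), ← integral_Ioc_eq_integral_Ioo,
    ← intervalIntegral.integral_of_le two_pi_pos.le] at hlint
  have hmeas := (measurable_gradSq v).aestronglyMeasurable (μ := volume.restrict (Metric.ball 0 ϵ))
  have hnonneg := ae_of_all (volume.restrict (Metric.ball 0 ϵ)) (gradSq_nonneg v)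
  refine ⟨⟨hmeas, (hasFiniteIntegral_iff_ofReal hnonneg).mpr (hlint ▸ ENNReal.ofReal_lt_top)⟩, ?_⟩
  rw [integral_eq_lintegral_of_nonneg_ae hnonneg hmeas, hlint, ENNReal.toReal_ofReal]
  have := intervalIntegral.integral_nonneg two_pi_pos.le (μ := volume)
    fun φ _ ↦ show 0 ≤ ‖h φ‖ ^ 2 + ‖deriv h φ‖ ^ 2 by positivity
  positivity

end RadialExtension

/-- inequality (4.13) in the paper. Let `h : ℝ → ℂ` be continuously
differentiable and `2π`-periodic, and let `v` be the radially linear extension to the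
open ball `B_ϵ` of the boundary values `h`, i.e. `v(r cos φ, r sin φ) = (r/ϵ) h(φ)` for
`0 ≤ r < ϵ`. Then `∫_{B_ϵ} |∇v|² ≤ 4 ∫₀^{2π} (|h|² + |h′|²)`. -/
theorem radial_extension_gradient_bound (ϵ : ℝ) (hϵ : 0 < ϵ) (h : ℝ → ℂ)
    (hsmooth : ContDiff ℝ 1 h) (hper : Function.Periodic h (2 * π)) (v : E2 → ℂ)
    (hv : ∀ r φ : ℝ, 0 ≤ r → r < ϵ → 0 ≤ φ → φ < 2 * π →
      v (pt (r * Real.cos φ) (r * Real.sin φ)) = (r / ϵ : ℝ) * h φ) :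
    ∫ p in Metric.ball (0 : E2) ϵ, gradSq v p
      ≤ 4 * ∫ φ in (0:ℝ)..(2 * π), (‖h φ‖ ^ 2 + ‖deriv h φ‖ ^ 2) := by
  have hcont : Continuous fun φ ↦ ‖h φ‖ ^ 2 + ‖deriv h φ‖ ^ 2 :=
    (hsmooth.continuous.norm.pow 2).add ((hsmooth.continuous_deriv le_rfl).norm.pow 2)
  have hdiff := (hsmooth.differentiable one_ne_zero).differentiableOn (s := Ioo 0 (2 * π))
  have henergy := (radial_extension_gradient_bound_general hϵ hdiff
    (hcont.intervalIntegrable _ _) fun r hr φ hφ ↦ hv r φ hr.1.le hr.2 hφ.1.le hφ.2).2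
  have hnonneg : 0 ≤ ∫ p in Metric.ball (0 : E2) ϵ, gradSq v p := integral_nonneg (gradSq_nonneg v)
  linarith
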